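/- arXiv:0908.1328 — 2 statements merged into one kernel-verified Lean document; each statement's English description precedes it below -/
import Mathlib

section
/- For all natural numbers n ≥ 1 and real parameters a, b, x (with nonzero denominators), the monic Jacobi polynomials satisfy the structure relation (1−x²)·(P_n^{(a,b)})'(x) = −n·P_{n+1}^{(a,b)}(x) + (2n(a−b)(n+a+b+1)/((2n+2+a+b)(2n+a+b)))·P_n^{(a,b)}(x) + (4n(n+b)(a+n)(n+a+b+1)(n+a+b)/((2n+a+b+1)(2n+a+b−1)(2n+a+b)²))·P_{n-1}^{(a,b)}(x). -/
/-- Rising factorial `(a)_k = a(a+1)⋯(a+k-1)`. -/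
noncomputable def rf (a : ℝ) (k : ℕ) : ℝ := ∏ j ∈ Finset.range k, (a + j)

/-- Monic Jacobi polynomials
`P_n^{(a,b)}(x) = ((a+1)_n 2^n / (n+a+b+1)_n) ∑_{k=0}^n
  ((-n)_k (n+a+b+1)_k / ((a+1)_k k!)) ((1-x)/2)^k`. -/
noncomputable def jacobi (a b : ℝ) (n : ℕ) (x : ℝ) : ℝ :=
  rf (a + 1) n * 2 ^ n / rf ((n : ℝ) + a + b + 1) n *
    ∑ k ∈ Finset.range (n + 1),
      rf (-(n : ℝ)) k * rf ((n : ℝ) + a + b + 1) k / (rf (a + 1) k * (k.factorial : ℝ)) *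
        ((1 - x) / 2) ^ k

/-- Derivative of the monic Jacobi polynomial with respect to `x`. -/
noncomputable def jacobiDeriv (a b : ℝ) (n : ℕ) (x : ℝ) : ℝ := deriv (jacobi a b n) x

/-!
The relation factors through shifts of the parameters: differentiation lowers the degree of
`P_n^{(a,b)}` and raises both parameters, while multiplication by `1 + x`, resp. `1 - x`, lowers
`b`, resp. `a`, again, at the price of a two-term combination of consecutive degrees. Applied to
`(1 - x)(1 + x) · n P_{n-1}^{(a+1,b+1)}` these combinations produce the three terms of the relation.
The three shifts are, up to normalization, the derivative formula and two contiguous relations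
of Gauss's hypergeometric function.
-/

open Polynomial

section Hypergeometric

theorem ascPochhammer_succ_eval_left {S : Type*} [CommSemiring S] (k : ℕ) (s : S) :
    (ascPochhammer S (k + 1)).eval s = s * (ascPochhammer S k).eval (s + 1) := by
  simp [ascPochhammer_succ_left]

variable {K : Type*} [Field K]

theorem ordinaryHypergeometricCoefficient_zero (α β γ : K) :
    ordinaryHypergeometricCoefficient α β γ 0 = 1 := by
  simp [ordinaryHypergeometricCoefficient, ascPochhammer_zero]

/-- The terminating hypergeometric series `₂F₁(-n, β; γ; X)`, as a polynomial. Coefficients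
whose denominator `(γ)_k` vanishes are `0`. -/
noncomputable def hypergeometricPolynomial (n : ℕ) (β γ : K) : K[X] :=
  ∑ k ∈ Finset.range (n + 1), monomial k (ordinaryHypergeometricCoefficient (-(n : K)) β γ k)

theorem ordinaryHypergeometricCoefficient_neg_natCast_of_lt {n k : ℕ} (h : n < k) (β γ : K) :
    ordinaryHypergeometricCoefficient (-(n : K)) β γ k = 0 := by
  simp [ascPochhammer_eval_neg_coe_nat_of_lt h]

theorem coeff_hypergeometricPolynomial (n : ℕ) (β γ : K) (k : ℕ) :
    (hypergeometricPolynomial n β γ).coeff k =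
      ordinaryHypergeometricCoefficient (-(n : K)) β γ k := by
  simp only [hypergeometricPolynomial, finsetSum_coeff, coeff_monomial, Finset.sum_ite_eq',
    Finset.mem_range]
  split_ifs with h
  · rfl
  · exact (ordinaryHypergeometricCoefficient_neg_natCast_of_lt (by lia) β γ).symm

variable [CharZero K]

theorem succ_mul_ordinaryHypergeometricCoefficient_succ (α β γ : K) (k : ℕ) :
    (k + 1) * ordinaryHypergeometricCoefficient α β γ (k + 1) =
      α * β / γ * ordinaryHypergeometricCoefficient (α + 1) (β + 1) (γ + 1) k := by
  have hk : (k : K) + 1 ≠ 0 := k.cast_add_one_ne_zero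
  simp only [ordinaryHypergeometricCoefficient, ascPochhammer_succ_eval_left, Nat.factorial_succ,
    Nat.cast_mul, Nat.cast_succ]
  field_simp

theorem ordinaryHypergeometricCoefficient_succ_sub (α β γ : K) (k : ℕ) :
    ordinaryHypergeometricCoefficient α β γ (k + 1) -
        ordinaryHypergeometricCoefficient (α - 1) (β + 1) γ (k + 1) =
      (β - α + 1) / γ * ordinaryHypergeometricCoefficient α (β + 1) (γ + 1) k := by
  have hk : (k : K) + 1 ≠ 0 := k.cast_add_one_ne_zero
  simp only [ordinaryHypergeometricCoefficient, ascPochhammer_succ_eval k α,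
    ascPochhammer_succ_eval_left k β, ascPochhammer_succ_eval_left k (α - 1), sub_add_cancel,
    ascPochhammer_succ_eval k (β + 1), ascPochhammer_succ_eval_left k γ, Nat.factorial_succ,
    Nat.cast_mul, Nat.cast_succ]
  field_simp
  ring

theorem mul_ordinaryHypergeometricCoefficient_succ_sub (α β : K) {γ : K} {k : ℕ}
    (hγ : γ + k ≠ 0) :
    (α - β - 1) * (ordinaryHypergeometricCoefficient α (β + 1) γ (k + 1) -
        ordinaryHypergeometricCoefficient α (β + 1) γ k) =
      (α - γ) * ordinaryHypergeometricCoefficient (α - 1) (β + 1) γ (k + 1) +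
        (γ - β - 1) * ordinaryHypergeometricCoefficient α β γ (k + 1) := by
  have hk : (k : K) + 1 ≠ 0 := k.cast_add_one_ne_zero
  simp only [ordinaryHypergeometricCoefficient, ascPochhammer_succ_eval k α,
    ascPochhammer_succ_eval_left k β, ascPochhammer_succ_eval_left k (α - 1), sub_add_cancel,
    ascPochhammer_succ_eval k (β + 1), ascPochhammer_succ_eval k γ, Nat.factorial_succ,
    Nat.cast_mul, Nat.cast_succ]
  field_simp
  ring

theorem derivative_hypergeometricPolynomial_succ (n : ℕ) (β γ : K) :
    derivative (hypergeometricPolynomial (n + 1) β γ) =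
      C (-(n + 1) * β / γ) * hypergeometricPolynomial n (β + 1) (γ + 1) := by
  ext k
  rw [coeff_derivative, coeff_C_mul, coeff_hypergeometricPolynomial,
    coeff_hypergeometricPolynomial, mul_comm, succ_mul_ordinaryHypergeometricCoefficient_succ]
  simp

theorem hypergeometricPolynomial_sub_succ (n : ℕ) (β γ : K) :
    hypergeometricPolynomial n β γ - hypergeometricPolynomial (n + 1) (β + 1) γ =
      C ((β + n + 1) / γ) * (X * hypergeometricPolynomial n (β + 1) (γ + 1)) := by
  ext k
  cases k with
  | zero =>
    simp only [coeff_sub, coeff_C_mul, coeff_X_mul_zero, coeff_hypergeometricPolynomial,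
      ordinaryHypergeometricCoefficient_zero, sub_self, mul_zero]
  | succ k =>
    simpa [coeff_hypergeometricPolynomial, sub_eq_add_neg, add_comm, add_left_comm] using
      ordinaryHypergeometricCoefficient_succ_sub (-(n : K)) β γ k

theorem one_sub_X_mul_hypergeometricPolynomial (n : ℕ) (β : K) {γ : K}
    (hγ : ∀ k ≤ n, γ + (k : K) ≠ 0) :
    C (β + n + 1) * ((1 - X) * hypergeometricPolynomial n (β + 1) γ) =
      C (γ + n) * hypergeometricPolynomial (n + 1) (β + 1) γ +
        C (β + 1 - γ) * hypergeometricPolynomial n β γ := by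
  ext k
  simp only [sub_mul, one_mul, coeff_add, coeff_sub, coeff_C_mul, coeff_hypergeometricPolynomial]
  cases k with
  | zero =>
    simp only [coeff_X_mul_zero, ordinaryHypergeometricCoefficient_zero]
    ring
  | succ k =>
    rw [coeff_X_mul, coeff_hypergeometricPolynomial]
    rcases le_or_gt k n with hk | hk
    · have contiguous :=
        mul_ordinaryHypergeometricCoefficient_succ_sub (-(n : K)) β (hγ k hk)
      rw [Nat.cast_succ, neg_add']
      linear_combination -contiguous
    · simp only [ordinaryHypergeometricCoefficient_neg_natCast_of_lt hk,
        ordinaryHypergeometricCoefficient_neg_natCast_of_lt (show n < k + 1 by lia),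
        ordinaryHypergeometricCoefficient_neg_natCast_of_lt (show n + 1 < k + 1 by lia)]
      ring

end Hypergeometric

theorem rf_eq_ascPochhammer_eval (a : ℝ) (k : ℕ) : rf a k = (ascPochhammer ℝ k).eval a := by
  induction k with
  | zero => simp [rf]
  | succ k ih => rw [ascPochhammer_succ_eval, ← ih, rf, Finset.prod_range_succ, rf]

theorem rf_ne_zero_iff {a : ℝ} {n : ℕ} : rf a n ≠ 0 ↔ ∀ k < n, a + (k : ℝ) ≠ 0 := by
  simp [rf, Finset.prod_ne_zero_iff]

/-- The value of the monic Jacobi polynomial `P_n^{(a,b)}` at `1`, which is the factor in front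
of the hypergeometric sum. -/
noncomputable def jacobiAtOne (a b : ℝ) (n : ℕ) : ℝ :=
  (ascPochhammer ℝ n).eval (a + 1) * 2 ^ n / (ascPochhammer ℝ n).eval (n + a + b + 1)

theorem jacobi_eq_eval (a b : ℝ) (n : ℕ) (x : ℝ) :
    jacobi a b n x =
      jacobiAtOne a b n *
        (hypergeometricPolynomial n (n + a + b + 1) (a + 1)).eval ((1 - x) / 2) := by
  simp only [jacobi, jacobiAtOne, hypergeometricPolynomial, eval_finsetSum, eval_monomial,
    rf_eq_ascPochhammer_eval, ordinaryHypergeometricCoefficient]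
  congr 1
  refine Finset.sum_congr rfl fun k _ => ?_
  rw [div_eq_mul_inv, mul_inv]
  ring

section Normalization

/-- The quotient `P_{n+1}^{(a,b)}(1) / P_n^{(a,b)}(1)`, in closed form. -/
noncomputable def jacobiRatio (a b : ℝ) (n : ℕ) : ℝ :=
  2 * (n + a + 1) * (n + a + b + 1) / ((2 * n + a + b + 1) * (2 * n + a + b + 2))

theorem jacobiRatio_swap_mul (a b : ℝ) (n : ℕ) :
    jacobiRatio b (a + 1) n * jacobiRatio a b n =
      4 * (n + b + 1) * (n + a + 1) * (n + a + b + 2) * (n + a + b + 1) /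
        ((2 * n + a + b + 3) * (2 * n + a + b + 1) * (2 * n + a + b + 2) ^ 2) := by
  rw [jacobiRatio, jacobiRatio, div_mul_div_comm]
  congr 1 <;> ring

theorem jacobiAtOne_succ_eq_mul_left_shift (a b : ℝ) (n : ℕ) :
    jacobiAtOne a b (n + 1) =
      2 * (a + 1) / (2 * n + a + b + 2) * jacobiAtOne (a + 1) b n := by
  rw [jacobiAtOne, jacobiAtOne, ascPochhammer_succ_eval_left n (a + 1), ascPochhammer_succ_eval,
    show ((n + 1 : ℕ) : ℝ) + a + b + 1 = n + (a + 1) + b + 1 by push_cast; ring,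
    show (n : ℝ) + (a + 1) + b + 1 + n = 2 * n + a + b + 2 by ring]
  simp only [div_eq_mul_inv, mul_inv]
  ring

theorem jacobiAtOne_succ_eq_mul_right_shift (a b : ℝ) (n : ℕ) :
    jacobiAtOne a b (n + 1) =
      2 * (n + a + 1) / (2 * n + a + b + 2) * jacobiAtOne a (b + 1) n := by
  rw [jacobiAtOne, jacobiAtOne, ascPochhammer_succ_eval, ascPochhammer_succ_eval,
    show ((n + 1 : ℕ) : ℝ) + a + b + 1 = n + a + (b + 1) + 1 by push_cast; ring,
    show (n : ℝ) + a + (b + 1) + 1 + n = 2 * n + a + b + 2 by ring]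
  simp only [div_eq_mul_inv, mul_inv]
  ring

theorem jacobiAtOne_succ_eq_mul_shift (a b : ℝ) (n : ℕ) :
    jacobiAtOne a b (n + 1) =
      2 * (a + 1) / (n + a + b + 2) * jacobiAtOne (a + 1) (b + 1) n := by
  rw [jacobiAtOne, jacobiAtOne, ascPochhammer_succ_eval_left, ascPochhammer_succ_eval_left,
    show ((n + 1 : ℕ) : ℝ) + a + b + 1 = n + a + b + 2 by push_cast; ring,
    show (n : ℝ) + (a + 1) + (b + 1) + 1 = n + a + b + 2 + 1 by ring]
  simp only [div_eq_mul_inv, mul_inv]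
  ring

variable {a b : ℝ} {n : ℕ}

theorem jacobiAtOne_right_shift (hn : (n : ℝ) + a + b + 1 ≠ 0) :
    jacobiAtOne a (b + 1) n =
      (n + a + b + 1) / (2 * n + a + b + 1) * jacobiAtOne a b n := by
  have pochhammer_shift : (n + a + b + 1) * (ascPochhammer ℝ n).eval (n + a + (b + 1) + 1) =
      (ascPochhammer ℝ n).eval (n + a + b + 1) * (2 * n + a + b + 1) := by
    rw [show (n : ℝ) + a + (b + 1) + 1 = n + a + b + 1 + 1 by ring,
      ← ascPochhammer_succ_eval_left, ascPochhammer_succ_eval]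
    ring
  rw [jacobiAtOne, jacobiAtOne, ← mul_div_mul_left _ _ hn, pochhammer_shift, div_mul_div_comm,
    mul_comm (2 * (n : ℝ) + a + b + 1)]

theorem jacobiAtOne_succ (hn : (n : ℝ) + a + b + 1 ≠ 0) :
    jacobiAtOne a b (n + 1) = jacobiRatio a b n * jacobiAtOne a b n := by
  rw [jacobiAtOne_succ_eq_mul_right_shift, jacobiAtOne_right_shift hn, jacobiRatio, ← mul_assoc,
    div_mul_div_comm, mul_comm (2 * (n : ℝ) + a + b + 2)]

theorem jacobiRatio_succ_sub_swap (h2 : 2 * (n : ℝ) + a + b + 2 ≠ 0)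
    (h3 : 2 * (n : ℝ) + a + b + 3 ≠ 0) (h4 : 2 * (n : ℝ) + a + b + 4 ≠ 0) :
    jacobiRatio a b (n + 1) - jacobiRatio b (a + 1) n =
      2 * (a - b) * (n + a + b + 2) / ((2 * n + a + b + 4) * (2 * n + a + b + 2)) := by
  rw [jacobiRatio, jacobiRatio,
    show 2 * ((n + 1 : ℕ) : ℝ) + a + b + 1 = 2 * n + a + b + 3 by push_cast; ring,
    show 2 * ((n + 1 : ℕ) : ℝ) + a + b + 2 = 2 * n + a + b + 4 by push_cast; ring,
    show 2 * (n : ℝ) + b + (a + 1) + 1 = 2 * n + a + b + 2 by ring,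
    show 2 * (n : ℝ) + b + (a + 1) + 2 = 2 * n + a + b + 3 by ring]
  push_cast
  field_simp
  ring

end Normalization

section ParameterShift

variable {a b : ℝ} {n : ℕ}

theorem jacobiDeriv_succ (ha : a + 1 ≠ 0) (hn : (n : ℝ) + a + b + 2 ≠ 0) (x : ℝ) :
    jacobiDeriv a b (n + 1) x = (n + 1) * jacobi (a + 1) (b + 1) n x := by
  have hasDerivAt_jacobi : HasDerivAt (jacobi a b (n + 1))
      (jacobiAtOne a b (n + 1) *
        ((derivative (hypergeometricPolynomial (n + 1) (n + a + b + 2) (a + 1))).eval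
          ((1 - x) / 2) * (-1 / 2))) x := by
    rw [funext (jacobi_eq_eval a b (n + 1)),
      show ((n + 1 : ℕ) : ℝ) + a + b + 1 = n + a + b + 2 by push_cast; ring]
    exact ((Polynomial.hasDerivAt _ _).comp x
      (((hasDerivAt_id x).const_sub 1).div_const 2)).const_mul _
  rw [jacobiDeriv, hasDerivAt_jacobi.deriv, derivative_hypergeometricPolynomial_succ, eval_C_mul,
    jacobiAtOne_succ_eq_mul_shift, jacobi_eq_eval,
    show (n : ℝ) + (a + 1) + (b + 1) + 1 = n + a + b + 2 + 1 by ring]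
  field_simp

theorem one_sub_mul_jacobi (ha : a + 1 ≠ 0) (hn : (n : ℝ) + a + b + 1 ≠ 0)
    (h2n : 2 * (n : ℝ) + a + b + 2 ≠ 0) (x : ℝ) :
    (1 - x) * jacobi (a + 1) b n x =
      jacobiRatio a b n * jacobi a b n x - jacobi a b (n + 1) x := by
  have contiguous := congrArg (eval ((1 - x) / 2))
    (hypergeometricPolynomial_sub_succ n (n + a + b + 1) (a + 1))
  simp only [eval_sub, eval_mul, eval_C, eval_X] at contiguous
  rw [jacobi_eq_eval, jacobi_eq_eval, jacobi_eq_eval, ← mul_assoc (jacobiRatio a b n),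
    ← jacobiAtOne_succ hn, ← mul_sub,
    show ((n + 1 : ℕ) : ℝ) + a + b + 1 = n + a + b + 1 + 1 by push_cast; ring,
    show (n : ℝ) + (a + 1) + b + 1 = n + a + b + 1 + 1 by ring, contiguous,
    jacobiAtOne_succ_eq_mul_left_shift]
  field_simp
  ring

theorem one_add_mul_jacobi (ha : ∀ k ≤ n, a + 1 + (k : ℝ) ≠ 0) (hn : (n : ℝ) + a + b + 1 ≠ 0)
    (h2n : 2 * (n : ℝ) + a + b + 2 ≠ 0) (x : ℝ) :
    (1 + x) * jacobi a (b + 1) n x =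
      jacobi a b (n + 1) x + jacobiRatio b a n * jacobi a b n x := by
  have contiguous := congrArg (eval ((1 - x) / 2))
    (one_sub_X_mul_hypergeometricPolynomial n (n + a + b + 1) ha)
  simp only [eval_add, eval_sub, eval_mul, eval_C, eval_X, eval_one] at contiguous
  have ratio_mul_atOne : jacobiRatio b a n * jacobiAtOne a b n =
      2 * (n + b + 1) / (2 * n + a + b + 2) * jacobiAtOne a (b + 1) n := by
    rw [jacobiAtOne_right_shift hn, jacobiRatio, add_right_comm _ b a, add_right_comm _ b a,
      ← mul_assoc, div_mul_div_comm, mul_comm (2 * (n : ℝ) + a + b + 2)]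
  rw [jacobi_eq_eval, jacobi_eq_eval, jacobi_eq_eval, ← mul_assoc (jacobiRatio b a n),
    ratio_mul_atOne, jacobiAtOne_succ_eq_mul_right_shift,
    show ((n + 1 : ℕ) : ℝ) + a + b + 1 = n + a + b + 1 + 1 by push_cast; ring,
    show (n : ℝ) + a + (b + 1) + 1 = n + a + b + 1 + 1 by ring]
  field_simp
  linear_combination 2 * jacobiAtOne a (b + 1) n * contiguous

theorem one_sub_sq_mul_jacobiDeriv_succ (ha : ∀ k ≤ n + 1, a + 1 + (k : ℝ) ≠ 0)
    (h1 : (n : ℝ) + a + b + 1 ≠ 0) (h2 : (n : ℝ) + a + b + 2 ≠ 0)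
    (h2n2 : 2 * (n : ℝ) + a + b + 2 ≠ 0) (h2n3 : 2 * (n : ℝ) + a + b + 3 ≠ 0)
    (h2n4 : 2 * (n : ℝ) + a + b + 4 ≠ 0) (x : ℝ) :
    (1 - x ^ 2) * jacobiDeriv a b (n + 1) x =
      (n + 1) * (-jacobi a b (n + 2) x +
        (jacobiRatio a b (n + 1) - jacobiRatio b (a + 1) n) * jacobi a b (n + 1) x +
        jacobiRatio b (a + 1) n * jacobiRatio a b n * jacobi a b n x) := by
  have ha0 : a + 1 ≠ 0 := by simpa using ha 0 (Nat.zero_le _)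
  have ha_succ : ∀ k ≤ n, a + 1 + 1 + (k : ℝ) ≠ 0 := fun k hk => by
    simpa [add_assoc, add_comm (1 : ℝ)] using ha (k + 1) (Nat.succ_le_succ hk)
  have deriv_eq := jacobiDeriv_succ ha0 h2 x
  have lower_b := one_add_mul_jacobi (b := b) (n := n) ha_succ (by convert h2 using 1; ring)
    (by convert h2n3 using 1; ring) x
  have lower_a_succ := one_sub_mul_jacobi (b := b) (n := n + 1) ha0
    (by convert h2 using 1; push_cast; ring) (by convert h2n4 using 1; push_cast; ring) x
  have lower_a := one_sub_mul_jacobi ha0 h1 h2n2 x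
  linear_combination (1 - x ^ 2) * deriv_eq + (n + 1) * (1 - x) * lower_b +
    (n + 1) * lower_a_succ + (n + 1) * jacobiRatio b (a + 1) n * lower_a

end ParameterShift

theorem jacobi_structure_relation (n : ℕ) (hn : 1 ≤ n) (a b x : ℝ)
    (hpoch1 : ∀ k ≤ n + 1, rf (a + 1) k ≠ 0)
    (hpoch2 : ∀ m ≤ n + 1, rf ((m : ℝ) + a + b + 1) m ≠ 0)
    (h1 : 2 * (n : ℝ) + a + b ≠ 0) (h2 : 2 * (n : ℝ) + a + b + 1 ≠ 0)
    (h3 : 2 * (n : ℝ) + a + b - 1 ≠ 0) (h4 : 2 * (n : ℝ) + 2 + a + b ≠ 0) :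
    (1 - x ^ 2) * jacobiDeriv a b n x =
      -(n : ℝ) * jacobi a b (n + 1) x +
        (2 * n * (a - b) * (n + a + b + 1) / ((2 * n + 2 + a + b) * (2 * n + a + b))) *
          jacobi a b n x +
        (4 * n * (n + b) * (a + n) * (n + a + b + 1) * (n + a + b) /
            ((2 * n + a + b + 1) * (2 * n + a + b - 1) * (2 * n + a + b) ^ 2)) *
          jacobi a b (n - 1) x := by
  obtain ⟨m, rfl⟩ := Nat.exists_eq_add_of_le' hn
  push_cast at h1 h2 h3 h4
  have ha : ∀ k ≤ m + 1, a + 1 + (k : ℝ) ≠ 0 := fun k hk =>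
    rf_ne_zero_iff.1 (hpoch1 (m + 2) le_rfl) k (Nat.lt_succ_of_le hk)
  have hm2 : (m : ℝ) + a + b + 2 ≠ 0 := by
    convert rf_ne_zero_iff.1 (hpoch2 (m + 1) (by lia)) 0 m.succ_pos using 1
    push_cast; ring
  have hm1 : (m : ℝ) + a + b + 1 ≠ 0 := by
    rcases m.eq_zero_or_pos with rfl | hm
    · convert h3 using 1; push_cast; ring
    · simpa using rf_ne_zero_iff.1 (hpoch2 m (by lia)) 0 hm
  have h2m2 : 2 * (m : ℝ) + a + b + 2 ≠ 0 := by convert h1 using 1; ring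
  have h2m3 : 2 * (m : ℝ) + a + b + 3 ≠ 0 := by convert h2 using 1; ring
  have h2m4 : 2 * (m : ℝ) + a + b + 4 ≠ 0 := by convert h4 using 1; ring
  rw [one_sub_sq_mul_jacobiDeriv_succ ha hm1 hm2 h2m2 h2m3 h2m4,
    jacobiRatio_succ_sub_swap h2m2 h2m3 h2m4, jacobiRatio_swap_mul, Nat.add_sub_cancel]
  push_cast
  ring
end

section
/- For all natural numbers n ≥ 1 and real parameters a, b, x (with nonzero denominators), the Jacobi polynomials satisfy P_n^{(a−1,b+1)}(x) = (1/(n+1))·(P_{n+1}^{(a,b)})'(x) − (4(b+1+n)/((2n+2+a+b)(2n+a+b)))·(P_n^{(a,b)})'(x) + (4(b+1+n)(b+n)n/((2n+a+b−1)(2n+a+b+1)(2n+a+b)²))·(P_{n-1}^{(a,b)})'(x). -/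
/-!
Expanding in powers of `x - 1` clears the denominators `(a + 1)_k`: the coefficients become
`C(n, k) 2^(n-k) (a + k + 1)_(n-k) / (n + a + b + k + 1)_(n-k)`. This makes two facts visible:
`P_n^{(a,b)}' = n P_{n-1}^{(a+1,b+1)}`, and a two-term relation expressing `P_n^{(a,b)}` through
`P_n^{(a+1,b)}` and `P_{n-1}^{(a+1,b)}`. Applying the latter twice passes from `(a - 1, b + 1)` to
`(a + 1, b + 1)`, where all three polynomials are multiples of derivatives of polynomials with
parameters `(a, b)`.
-/

section RisingFactorial

variable (a : ℝ)

theorem rf_succ (k : ℕ) : rf a (k + 1) = rf a k * (a + k) :=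
  Finset.prod_range_succ _ _

theorem rf_add (m n : ℕ) : rf a (m + n) = rf a m * rf (a + m) n := by
  simp only [rf, Finset.prod_range_add, Nat.cast_add, add_assoc]

theorem rf_succ' (k : ℕ) : rf a (k + 1) = a * rf (a + 1) k := by
  rw [add_comm, rf_add]
  simp [rf]

theorem rf_neg_natCast (n k : ℕ) :
    rf (-(n : ℝ)) k = (-1) ^ k * (k.factorial * n.choose k) := by
  have hneg : ∀ j : ℕ, -(n : ℝ) + j = -(n - j) := fun j => by ring
  simp only [rf, hneg]
  rw [Finset.prod_neg, Finset.card_range, ← descPochhammer_eval_eq_prod_range,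
    descPochhammer_eval_eq_descFactorial, Nat.descFactorial_eq_factorial_mul_choose, Nat.cast_mul]

variable {a}

theorem rf_add_natCast_ne_zero {n i m : ℕ} (h : rf a n ≠ 0) (hn : i + m ≤ n) :
    rf (a + i) m ≠ 0 := by
  obtain ⟨l, rfl⟩ := Nat.exists_eq_add_of_le hn
  rw [rf_add, rf_add] at h
  exact right_ne_zero_of_mul (left_ne_zero_of_mul h)

theorem rf_add_one_ne_zero {n : ℕ} (h : rf a (n + 1) ≠ 0) : rf (a + 1) n ≠ 0 := by
  simpa using rf_add_natCast_ne_zero (i := 1) h (add_comm 1 n).le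

theorem rf_ne_zero_of_le {n m : ℕ} (h : rf a n ≠ 0) (hm : m ≤ n) : rf a m ≠ 0 := by
  simpa using rf_add_natCast_ne_zero (i := 0) h (by simpa using hm)

theorem add_natCast_ne_zero_of_rf_ne_zero {n i : ℕ} (h : rf a n ≠ 0) (hi : i < n) :
    a + i ≠ 0 := by
  simpa [rf] using rf_add_natCast_ne_zero (m := 1) h hi

theorem rf_succ_ne_zero {m n : ℕ} (hn : 1 ≤ n) (h : rf a n ≠ 0) (h' : rf (a + 1) m ≠ 0) :
    rf a (m + 1) ≠ 0 := by
  have ha : a ≠ 0 := by simpa using add_natCast_ne_zero_of_rf_ne_zero h hn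
  rw [rf_succ']
  exact mul_ne_zero ha h'

theorem rf_div_rf_sub_shift {p q : ℝ} {j : ℕ} (hq : rf q (j + 2) ≠ 0) :
    rf p (j + 1) / rf q (j + 1) - rf (p + 1) (j + 1) / rf (q + 1) (j + 1) =
      (j + 1) * (p - q) / ((q + j) * (q + j + 1)) * (rf (p + 1) j / rf q j) := by
  have hq0 : q ≠ 0 := by simpa using add_natCast_ne_zero_of_rf_ne_zero (i := 0) hq (by omega)
  have hqj : q + j ≠ 0 := add_natCast_ne_zero_of_rf_ne_zero hq (by omega)
  have hqj' : q + j + 1 ≠ 0 := by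
    simpa [add_assoc] using add_natCast_ne_zero_of_rf_ne_zero (i := j + 1) hq (by omega)
  have hrf : rf (q + 1) j ≠ 0 := rf_ne_zero_of_le (rf_add_one_ne_zero hq) j.le_succ
  have hrf_q : rf q j = q * rf (q + 1) j / (q + j) := by
    rw [eq_div_iff hqj, ← rf_succ, rf_succ']
  rw [rf_succ' p, rf_succ' q, rf_succ (p + 1), rf_succ (q + 1), hrf_q,
    add_right_comm p, add_right_comm q]
  field_simp
  ring

end RisingFactorial

/-- The coefficient of `(x - 1) ^ k` in the monic Jacobi polynomial `P_n^{(a,b)}`, for `k ≤ n`. It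
is written with `(a + 1)_n / (a + 1)_k` simplified to `(a + k + 1)_{n - k}`, and likewise for
`(n + a + b + 1)_k`, and vanishes for `n < k`. -/
noncomputable def jacobiCoeff (a b : ℝ) (n k : ℕ) : ℝ :=
  n.choose k * 2 ^ (n - k) * (rf (a + k + 1) (n - k) / rf (n + a + b + k + 1) (n - k))

/-- The coefficient of `P_{ν-1}^{(a+1,b)}` in the relation that expresses `P_ν^{(a,b)}` through
`P_ν^{(a+1,b)}` and `P_{ν-1}^{(a+1,b)}`. The degree `ν` is a real number, so that `ν - 1` is not
truncated. -/
noncomputable def jacobiShiftCoeff (a b ν : ℝ) : ℝ :=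
  2 * ν * (ν + b) / ((2 * ν + a + b) * (2 * ν + a + b + 1))

theorem jacobiShiftCoeff_add_shift {a b ν : ℝ} (h0 : 2 * ν + a + b ≠ 0)
    (h1 : 2 * ν + a + b + 1 ≠ 0) (h2 : 2 * ν + a + b + 2 ≠ 0) :
    jacobiShiftCoeff a b ν + jacobiShiftCoeff (a + 1) b ν =
      4 * ν * (ν + b) / ((2 * ν + a + b) * (2 * ν + a + b + 2)) := by
  have hshift : 2 * ν + (a + 1) + b = 2 * ν + a + b + 1 := by ring
  have hshift' : 2 * ν + a + b + 1 + 1 = 2 * ν + a + b + 2 := by ring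
  rw [jacobiShiftCoeff, jacobiShiftCoeff, hshift, hshift']
  field_simp
  ring

theorem jacobiShiftCoeff_mul_shift (a b ν : ℝ) :
    jacobiShiftCoeff a b ν * jacobiShiftCoeff (a + 1) b (ν - 1) =
      4 * ν * (ν - 1) * (ν + b) * (ν + b - 1) /
        ((2 * ν + a + b - 1) * (2 * ν + a + b) ^ 2 * (2 * ν + a + b + 1)) := by
  rw [jacobiShiftCoeff, jacobiShiftCoeff, div_mul_div_comm]
  congr 1 <;> ring

section Jacobi

variable {a b : ℝ} {n : ℕ}

theorem jacobiCoeff_eq_zero_of_lt {k : ℕ} (h : n < k) : jacobiCoeff a b n k = 0 := by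
  simp [jacobiCoeff, Nat.choose_eq_zero_of_lt h]

theorem jacobi_eq_sum (ha : rf (a + 1) n ≠ 0) (hab : rf (n + a + b + 1) n ≠ 0) (x : ℝ) :
    jacobi a b n x = ∑ k ∈ Finset.range (n + 1), jacobiCoeff a b n k * (x - 1) ^ k := by
  rw [jacobi, Finset.mul_sum]
  refine Finset.sum_congr rfl fun k hk => ?_
  obtain ⟨j, hj⟩ := Nat.exists_eq_add_of_le (Finset.mem_range_succ_iff.1 hk)
  have hak := rf_ne_zero_of_le ha (show k ≤ n by omega)
  have habk := rf_ne_zero_of_le hab (show k ≤ n by omega)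
  have hpow : (1 - x) ^ k = (-1) ^ k * (x - 1) ^ k := by rw [← mul_pow]; ring
  have hsign : ((-1 : ℝ) ^ k) ^ 2 = 1 := by rw [pow_right_comm, neg_one_sq, one_pow]
  have ha_split : rf (a + 1) n = rf (a + 1) k * rf (a + k + 1) j := by
    rw [hj, rf_add, add_right_comm]
  have hab_split : rf (n + a + b + 1) n = rf (n + a + b + 1) k * rf (n + a + b + k + 1) j := by
    rw [add_right_comm _ (k : ℝ), ← rf_add, ← hj]
  rw [hab_split] at hab
  have habj := right_ne_zero_of_mul hab
  have hnk : n - k = j := by omega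
  rw [jacobiCoeff, hnk, ha_split, hab_split, rf_neg_natCast, div_pow, hpow,
    show (2 : ℝ) ^ n = 2 ^ k * 2 ^ j by rw [hj, pow_add]]
  field_simp
  rw [hsign, mul_one]

theorem jacobi_zero (a b x : ℝ) : jacobi a b 0 x = 1 := by
  simp [jacobi, rf]

theorem succ_mul_jacobiCoeff_succ (a b : ℝ) (n k : ℕ) :
    (k + 1) * jacobiCoeff a b (n + 1) (k + 1) =
      (n + 1) * jacobiCoeff (a + 1) (b + 1) n k := by
  have hchoose : ((n : ℝ) + 1) * n.choose k = (n + 1).choose (k + 1) * (k + 1) :=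
    mod_cast Nat.add_one_mul_choose_eq n k
  have hnum : a + ((k : ℝ) + 1) + 1 = a + 1 + k + 1 := by ring
  have hden : (n : ℝ) + 1 + a + b + (k + 1) + 1 = n + (a + 1) + (b + 1) + k + 1 := by ring
  simp only [jacobiCoeff, Nat.add_sub_add_right, Nat.cast_succ, hnum, hden]
  linear_combination -(2 ^ (n - k) *
    (rf (a + 1 + k + 1) (n - k) / rf (n + (a + 1) + (b + 1) + k + 1) (n - k))) * hchoose

theorem jacobiDeriv_eq_mul_jacobi (ha : rf (a + 1) n ≠ 0) (hab : rf (n + a + b + 1) n ≠ 0)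
    (x : ℝ) : jacobiDeriv a b n x = n * jacobi (a + 1) (b + 1) (n - 1) x := by
  have hderiv : HasDerivAt (fun y => ∑ k ∈ Finset.range (n + 1), jacobiCoeff a b n k * (y - 1) ^ k)
      (∑ k ∈ Finset.range (n + 1), jacobiCoeff a b n k * (k * (x - 1) ^ (k - 1) * 1)) x :=
    HasDerivAt.fun_sum fun k _ =>
      (((hasDerivAt_id x).sub_const 1).pow k).const_mul (jacobiCoeff a b n k)
  rw [jacobiDeriv, funext (jacobi_eq_sum ha hab), hderiv.deriv, Finset.sum_range_succ']
  rcases n with _ | n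
  · simp
  have ha' : rf (a + 1 + 1) n ≠ 0 := rf_add_one_ne_zero ha
  have hab' : rf (n + (a + 1) + (b + 1) + 1) n ≠ 0 := by
    convert rf_add_one_ne_zero hab using 2
    push_cast
    ring
  rw [Nat.add_sub_cancel, jacobi_eq_sum ha' hab', Finset.mul_sum]
  simp only [Nat.cast_zero, zero_mul, mul_zero, add_zero, Nat.add_sub_cancel, mul_one]
  refine Finset.sum_congr rfl fun k _ => ?_
  push_cast
  linear_combination (x - 1) ^ k * succ_mul_jacobiCoeff_succ a b n k

theorem jacobiCoeff_succ_eq_jacobiCoeff_add_one_sub {k : ℕ}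
    (hab : rf ((n + 1 : ℕ) + a + b + 1) (n + 2) ≠ 0) (hk : k ≤ n + 1) :
    jacobiCoeff a b (n + 1) k = jacobiCoeff (a + 1) b (n + 1) k -
      jacobiShiftCoeff a b (n + 1) * jacobiCoeff (a + 1) b n k := by
  obtain rfl | hk := hk.eq_or_lt
  · rw [jacobiCoeff_eq_zero_of_lt (Nat.lt_succ_self n)]
    simp [jacobiCoeff, rf]
  obtain ⟨j, hj⟩ := Nat.exists_eq_add_of_le (Nat.lt_succ_iff.1 hk)
  have hj_cast : (n : ℝ) = k + j := mod_cast hj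
  have hexp : n - k = j := by omega
  have hexp' : n + 1 - k = j + 1 := by omega
  have hchoose : (n.choose k : ℝ) * (n + 1) = (n + 1).choose k * (j + 1) := by
    exact_mod_cast hexp' ▸ Nat.choose_mul_succ_eq n k
  have hq : rf (n + a + b + k + 2) (j + 2) ≠ 0 := by
    convert rf_add_natCast_ne_zero (i := k) (m := j + 2) hab (by omega) using 2
    push_cast
    ring
  have hshift := rf_div_rf_sub_shift (p := a + k + 1) hq
  rw [show a + k + 1 - (n + a + b + k + 2) = -(n + 1 + b) by ring,
    show n + a + b + k + 2 + j = 2 * (n + 1) + a + b by rw [hj_cast]; ring] at hshift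
  have hnum : a + 1 + (k : ℝ) + 1 = a + k + 1 + 1 := by ring
  have hden : (n : ℝ) + 1 + a + b + k + 1 = n + a + b + k + 2 := by ring
  have hden' : (n : ℝ) + 1 + (a + 1) + b + k + 1 = n + a + b + k + 2 + 1 := by ring
  have hden'' : (n : ℝ) + (a + 1) + b + k + 1 = n + a + b + k + 2 := by ring
  simp only [jacobiCoeff, jacobiShiftCoeff, Nat.cast_succ, hexp, hexp', hnum, hden, hden', hden'',
    sub_eq_iff_eq_add'.1 hshift]
  linear_combination 2 ^ (j + 1) * (n + 1 + b) /
    ((2 * (n + 1) + a + b) * (2 * (n + 1) + a + b + 1)) *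
    (rf (a + k + 1 + 1) j / rf (n + a + b + k + 2) j) * hchoose

theorem jacobi_eq_jacobi_add_one_sub (ha : rf (a + 1) (n + 1) ≠ 0)
    (hab : rf (n + a + b + 1) (n + 1) ≠ 0) (x : ℝ) :
    jacobi a b n x = jacobi (a + 1) b n x -
      jacobiShiftCoeff a b n * jacobi (a + 1) b (n - 1) x := by
  rcases n with _ | n
  · simp [jacobi_zero, jacobiShiftCoeff]
  have ha' : rf (a + 1 + 1) (n + 1) ≠ 0 := rf_add_one_ne_zero ha
  have hab' : rf ((n + 1 : ℕ) + (a + 1) + b + 1) (n + 1) ≠ 0 := by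
    convert rf_add_one_ne_zero hab using 2
    ring
  have hab'' : rf (n + (a + 1) + b + 1) n ≠ 0 := by
    convert rf_ne_zero_of_le hab (show n ≤ n + 2 by omega) using 2
    push_cast
    ring
  have hlower : jacobi (a + 1) b n x =
      ∑ k ∈ Finset.range (n + 2), jacobiCoeff (a + 1) b n k * (x - 1) ^ k := by
    rw [Finset.sum_range_succ, jacobiCoeff_eq_zero_of_lt (Nat.lt_succ_self n), zero_mul, add_zero,
      jacobi_eq_sum (rf_ne_zero_of_le ha' n.le_succ) hab'']
  rw [Nat.add_sub_cancel, hlower, jacobi_eq_sum (rf_ne_zero_of_le ha (Nat.le_succ _))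
    (rf_ne_zero_of_le hab (Nat.le_succ _)), jacobi_eq_sum ha' hab', Finset.mul_sum,
    ← Finset.sum_sub_distrib]
  refine Finset.sum_congr rfl fun k hk => ?_
  rw [jacobiCoeff_succ_eq_jacobiCoeff_add_one_sub hab (Finset.mem_range_succ_iff.1 hk)]
  push_cast
  ring

theorem jacobi_eq_jacobi_add_two_sub_add (ha : rf (a + 1) (n + 2) ≠ 0)
    (hab : rf (n + a + b + 1) (n + 2) ≠ 0) (x : ℝ) :
    jacobi a b n x = jacobi (a + 2) b n x -
      4 * n * (n + b) / ((2 * n + a + b) * (2 * n + a + b + 2)) * jacobi (a + 2) b (n - 1) x +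
      4 * n * (n - 1) * (n + b) * (n + b - 1) /
          ((2 * n + a + b - 1) * (2 * n + a + b) ^ 2 * (2 * n + a + b + 1)) *
        jacobi (a + 2) b (n - 2) x := by
  rcases n with _ | n
  · simp [jacobi_zero]
  have ha' : rf (a + 1 + 1) (n + 2) ≠ 0 := rf_add_one_ne_zero ha
  have hab' : rf ((n + 1 : ℕ) + (a + 1) + b + 1) (n + 2) ≠ 0 := by
    convert rf_add_one_ne_zero hab using 2
    ring
  have hab'' : rf (n + (a + 1) + b + 1) (n + 1) ≠ 0 := by
    convert rf_ne_zero_of_le hab (show n + 1 ≤ n + 3 by omega) using 2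
    push_cast
    ring
  have hden : ∀ i ≤ 2, 2 * ((n + 1 : ℕ) : ℝ) + a + b + (i : ℕ) ≠ 0 := fun i hi => by
    convert add_natCast_ne_zero_of_rf_ne_zero hab (show n + i < n + 1 + 2 by omega) using 1
    push_cast
    ring
  rw [jacobi_eq_jacobi_add_one_sub (rf_ne_zero_of_le ha (Nat.le_succ _))
    (rf_ne_zero_of_le hab (Nat.le_succ _)), jacobi_eq_jacobi_add_one_sub ha' hab',
    Nat.add_sub_cancel, jacobi_eq_jacobi_add_one_sub (rf_ne_zero_of_le ha' (Nat.le_succ _)) hab'',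
    show a + 1 + 1 = a + 2 by ring]
  rw [← jacobiShiftCoeff_add_shift (by simpa using hden 0) (by simpa using hden 1)
    (by simpa using hden 2), ← jacobiShiftCoeff_mul_shift, Nat.cast_succ, add_sub_cancel_right,
    show n + 1 - 2 = n - 1 by omega]
  ring

end Jacobi

theorem jacobi_parameter_shift_ba (n : ℕ) (hn : 1 ≤ n) (a b x : ℝ)
    (hpoch1 : ∀ k ≤ n + 1, rf (a + 1) k ≠ 0)
    (hpoch1' : ∀ k ≤ n, rf a k ≠ 0)
    (hpoch2 : ∀ m ≤ n + 1, rf ((m : ℝ) + a + b + 1) m ≠ 0)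
    (h1 : 2 * (n : ℝ) + a + b ≠ 0) (h2 : 2 * (n : ℝ) + a + b + 1 ≠ 0)
    (h3 : 2 * (n : ℝ) + a + b - 1 ≠ 0) (h4 : 2 * (n : ℝ) + 2 + a + b ≠ 0) :
    jacobi (a - 1) (b + 1) n x =
      (1 / ((n : ℝ) + 1)) * jacobiDeriv a b (n + 1) x -
        (4 * (b + 1 + n) / ((2 * n + 2 + a + b) * (2 * n + a + b))) *
          jacobiDeriv a b n x +
        (4 * (b + 1 + n) * (b + n) * n /
            ((2 * n + a + b - 1) * (2 * n + a + b + 1) * (2 * n + a + b) ^ 2)) *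
          jacobiDeriv a b (n - 1) x := by
  have ha : rf (a - 1 + 1) (n + 2) ≠ 0 := by
    rw [sub_add_cancel]
    exact rf_succ_ne_zero hn (hpoch1' n le_rfl) (hpoch1 (n + 1) le_rfl)
  have hab : rf (n + (a - 1) + (b + 1) + 1) (n + 2) ≠ 0 := by
    rw [show (n : ℝ) + (a - 1) + (b + 1) + 1 = n + a + b + 1 by ring]
    refine rf_succ_ne_zero hn (hpoch2 n n.le_succ) ?_
    rw [show (n : ℝ) + a + b + 1 + 1 = (n + 1 : ℕ) + a + b + 1 by push_cast; ring]
    exact hpoch2 (n + 1) le_rfl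
  have hderiv : ∀ m ≤ n + 1,
      jacobiDeriv a b m x = m * jacobi (a + 1) (b + 1) (m - 1) x := fun m hm =>
    jacobiDeriv_eq_mul_jacobi (rf_ne_zero_of_le (hpoch1 (n + 1) le_rfl) hm) (hpoch2 m hm) x
  have hsum : 2 * (n : ℝ) + (a - 1) + (b + 1) = 2 * n + a + b := by ring
  have hsum' : 2 * (n : ℝ) + 2 + a + b = 2 * n + a + b + 2 := by ring
  rw [jacobi_eq_jacobi_add_two_sub_add ha hab, hderiv (n + 1) le_rfl, hderiv n n.le_succ,
    hderiv (n - 1) (by omega), hsum, hsum', show a - 1 + 2 = a + 1 by ring, Nat.add_sub_cancel,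
    Nat.sub_sub]
  push_cast [hn]
  field_simp
  ring
end
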